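/- Let f = id ∗ g with g(n) = O(1), let δ ∈ {0, 1}, and define 𝔖_δ(x, D) = ∑_{D < d ≤ 2D} (f(d)/d) ψ(x/(d+δ)), where ψ(t) = {t} − 1/2. Then, using the exponent pair (1/2, 1/2), uniformly for 1 ≤ D ≤ x, 𝔖_δ(x, D) = O(x^{1/3} + x^{1/2} D^{−1/2} log x + x^{−1} D²). -/

import Mathlib

open Finset
open scoped FourierTransform fwdDiff Real

/-!
The difference quotient of the periodic Bernoulli function `B₂({t})` at step `η` is the sawtooth
`2 ({t} - 1/2)` up to `O(η)`, also across the jumps. Its Fourier series converges absolutely, so a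
sawtooth sum over points `u k` is controlled by the exponential sums `∑ k, 𝐞 (n * u k)`, `n ≥ 1`.

Writing `d = m * k` in `f(d) / d = ∑ m ∣ d, g(m) / m` leaves, for each `m`, the points
`x / (m * k + δ)` with `k` in an interval of length about `D / m`. The Kusmin–Landau inequality (for
small frequencies) and van der Corput's second derivative test (the exponent pair `(1/2, 1/2)`)
bound the exponential sums by `√(n * x / D) + D ^ 2 / (n * x * m)`, and the best `η` yields
`(x / m) ^ (1 / 3) + D ^ 2 / (x * m)` for the sawtooth sum. Divided by `m`, this is summable over
`m`, so no logarithm is lost.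
-/

/-! ### Sawtooth sums and exponential sums -/

lemma exists_fract_add_eq (u : ℝ) {η : ℝ} (hη : 0 ≤ η) :
    ∃ n : ℕ, Int.fract (u + η) = Int.fract u + η - n := by
  obtain ⟨n, hn⟩ := Int.le.dest (Int.floor_le_floor (le_add_of_nonneg_right hη : u ≤ u + η))
  refine ⟨n, ?_⟩
  rw [Int.fract, Int.fract, ← hn]
  push_cast
  ring

-- For the Bernoulli function at `u` and `u + η`, `n` counts the integers in between; crossing them
-- costs nothing because `n ≤ n ^ 2`.
lemma natCast_mul_add_sq_le (n : ℕ) {c r : ℝ} (hrc : r ≤ 1 + 2 * c) :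
    n * r + c ^ 2 ≤ 2 * (n + c) ^ 2 := by
  have hn : (n : ℝ) ≤ n ^ 2 := by exact_mod_cast Nat.le_self_pow two_ne_zero n
  calc n * r + c ^ 2 ≤ n * (1 + 2 * c) + c ^ 2 := by gcongr
    _ ≤ 2 * (n + c) ^ 2 := by linarith [sq_nonneg (n + c)]

theorem bernoulliFun_two_fract_add_sub_mem_Icc (u : ℝ) {η : ℝ} (hη : 0 ≤ η) :
    bernoulliFun 2 (Int.fract (u + η)) - bernoulliFun 2 (Int.fract u) ∈
      Set.Icc (2 * η * (Int.fract (u + η) - 1 / 2 - η)) (2 * η * (Int.fract u - 1 / 2 + η)) := by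
  obtain ⟨n, hn⟩ := exists_fract_add_eq u hη
  have hu := Int.fract_lt_one u
  have hv := Int.fract_nonneg (u + η)
  have hlo := natCast_mul_add_sq_le n (c := η - n) (r := 2 * Int.fract (u + η) - 1)
    (by linarith)
  have hhi := natCast_mul_add_sq_le n (c := η - n) (r := 1 - 2 * Int.fract u)
    (by linarith)
  rw [bernoulliFun_two, bernoulliFun_two]
  rw [hn] at hlo ⊢
  constructor <;> linarith

lemma re_fourierChar (t : ℝ) : (𝐞 t : ℂ).re = Real.cos (2 * π * t) := by
  rw [Real.fourierChar_apply, Complex.exp_ofReal_mul_I_re]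

-- The `n = 0` term is a division by zero, hence `0`.
theorem hasSum_bernoulliFun_two_fract (t : ℝ) :
    HasSum (fun n : ℕ ↦ (𝐞 (n * t) : ℂ).re / (π * n) ^ 2) (bernoulliFun 2 (Int.fract t)) := by
  have h := (hasSum_one_div_nat_pow_mul_cos one_ne_zero
    ⟨Int.fract_nonneg t, (Int.fract_lt_one t).le⟩).div_const (π ^ 2)
  convert! h using 1
  · funext n
    have hcos : Real.cos (2 * π * n * Int.fract t) = Real.cos (2 * π * (n * t)) := by
      rw [← Real.cos_sub_int_mul_two_pi (2 * π * (n * t)) (n * ⌊t⌋), Int.fract]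
      push_cast
      ring_nf
    rw [re_fourierChar, hcos, mul_pow, mul_comm (π ^ 2), mul_one, ← div_div, one_div_mul_eq_div]
  · rw [bernoulliFun]
    norm_num
    field_simp

lemma norm_fourierChar_sub_one (t : ℝ) : ‖(𝐞 t : ℂ) - 1‖ = 2 * |Real.sin (π * t)| := by
  rw [Real.fourierChar_apply, mul_comm, Complex.norm_exp_I_mul_ofReal_sub_one, Real.norm_eq_abs,
    abs_mul, abs_two, mul_assoc, mul_div_cancel_left₀ _ two_ne_zero]

lemma norm_fourierChar_sub_one_div_le (n : ℕ) (b : ℝ) :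
    ‖(𝐞 (n * b) : ℂ) - 1‖ / (π * n) ^ 2 ≤ min |b| (1 / n) / n := by
  rcases n.eq_zero_or_pos with rfl | hn
  · simp
  have hπ := Real.pi_gt_three
  rw [norm_fourierChar_sub_one, div_le_iff₀ (by positivity)]
  rcases min_choice |b| (1 / (n : ℝ)) with h | h <;> rw [h]
  · calc 2 * |Real.sin (π * (n * b))| ≤ 2 * |π * (n * b)| :=
          mul_le_mul_of_nonneg_left Real.abs_sin_le_abs two_pos.le
      _ = 2 * π * n * |b| := by
        rw [abs_mul, abs_mul, abs_of_pos Real.pi_pos, Nat.abs_cast]; ring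
      _ ≤ π * π * n * |b| := by gcongr; linarith
      _ = |b| / n * (π * n) ^ 2 := by field_simp
  · calc 2 * |Real.sin (π * (n * b))| ≤ 2 * 1 := by gcongr; exact Real.abs_sin_le_one _
      _ ≤ π ^ 2 := by nlinarith
      _ = 1 / n / n * (π * n) ^ 2 := by field_simp

lemma min_one_div_div_sqrt_le {β : ℝ} (hβ : 0 < β) {y : ℝ} (hy : 1 ≤ y) :
    min β (1 / y) / √y ≤
      8 * √β * (1 / (1 + √(β * (y - 1))) - 1 / (1 + √(β * y))) := by
  set p := √(β * y) with hp
  set q := √(β * (y - 1))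
  have hp0 : 0 < p := by positivity
  have hq0 : 0 ≤ q := Real.sqrt_nonneg _
  have hpsq : p ^ 2 = β * y := Real.sq_sqrt (by positivity)
  have hqsq : q ^ 2 = β * (y - 1) := Real.sq_sqrt (mul_nonneg hβ.le (by linarith))
  have hqp : q ≤ p := Real.sqrt_le_sqrt (by gcongr; linarith)
  have hmin : min β (1 / y) ≤ 4 * β / (1 + p) ^ 2 := by
    rw [le_div_iff₀ (by positivity)]
    rcases le_total p 1 with h | h
    · calc min β (1 / y) * (1 + p) ^ 2 ≤ β * (1 + 1) ^ 2 := by gcongr; exact min_le_left _ _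
        _ = 4 * β := by ring
    · calc min β (1 / y) * (1 + p) ^ 2 ≤ 1 / y * (p + p) ^ 2 := by gcongr; exact min_le_right _ _
        _ = 1 / y * (4 * p ^ 2) := by ring
        _ = 4 * β := by rw [hpsq]; field_simp
  calc min β (1 / y) / √y = min β (1 / y) * √β / p := by
        rw [hp, Real.sqrt_mul hβ.le]; field_simp
    _ ≤ 4 * β / (1 + p) ^ 2 * √β / p := by gcongr
    _ = 8 * √β * (β / ((p + p) * ((1 + p) * (1 + p)))) := by field_simp; ring
    _ ≤ 8 * √β * (β / ((p + q) * ((1 + p) * (1 + q)))) := by gcongr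
    _ = 8 * √β * (1 / (1 + q) - 1 / (1 + p)) := by
      have hβ' : β = (p + q) * (p - q) := by linear_combination hqsq - hpsq
      have : 0 < p + q := by positivity
      congr 1
      rw [hβ']
      field_simp
      ring

theorem sum_range_min_one_div_div_sqrt_le {β : ℝ} (hβ : 0 < β) (N : ℕ) :
    ∑ n ∈ range N, min β (1 / n) / √n ≤ 8 * √β := by
  have h (N : ℕ) : ∑ n ∈ range (N + 1), min β (1 / n) / √n ≤ 8 * √β * (1 - 1 / (1 + √(β * N))) := by
    induction N with
    | zero => simp
    | succ N ih =>
      have := min_one_div_div_sqrt_le hβ (y := N + 1) (by simp)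
      rw [add_sub_cancel_right] at this
      rw [sum_range_succ]
      push_cast
      linarith
  calc _ ≤ ∑ n ∈ range (N + 1), min β (1 / n) / √n :=
        sum_le_sum_of_subset_of_nonneg (range_mono N.le_succ) fun n _ _ ↦ by positivity
    _ ≤ 8 * √β * (1 - 1 / (1 + √(β * N))) := h N
    _ ≤ 8 * √β := mul_le_of_le_one_right (by positivity) (sub_le_self _ (by positivity))

section Sawtooth

variable {ι : Type*} {s : Finset ι} {u : ι → ℝ} {A E : ℝ}

lemma hasSum_sum_bernoulliFun_two_fract_sub (s : Finset ι) (u : ι → ℝ) (b : ℝ) :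
    HasSum (fun n : ℕ ↦ (((𝐞 (n * b) : ℂ) - 1) * ∑ k ∈ s, (𝐞 (n * u k) : ℂ)).re / (π * n) ^ 2)
      (∑ k ∈ s, (bernoulliFun 2 (Int.fract (u k + b)) - bernoulliFun 2 (Int.fract (u k)))) := by
  convert! hasSum_sum fun k (_ : k ∈ s) ↦
    (hasSum_bernoulliFun_two_fract (u k + b)).sub (hasSum_bernoulliFun_two_fract (u k)) using 1
  funext n
  simp_rw [← sub_div, ← sum_div, ← Complex.sub_re, ← Complex.re_sum, mul_sum, mul_add,
    AddChar.map_add_eq_mul, Circle.coe_mul, sub_one_mul, mul_comm]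

theorem abs_sum_bernoulliFun_two_fract_sub_le (hA : 0 ≤ A) (hE : 0 ≤ E)
    (hS : ∀ n : ℕ, n ≠ 0 → ‖∑ k ∈ s, (𝐞 (n * u k) : ℂ)‖ ≤ A * √n + E / n) {b : ℝ} (hb : b ≠ 0) :
    |∑ k ∈ s, (bernoulliFun 2 (Int.fract (u k + b)) - bernoulliFun 2 (Int.fract (u k)))| ≤
      8 * A * √|b| + 2 * E * |b| := by
  have hterm (n : ℕ) :
      |(((𝐞 (n * b) : ℂ) - 1) * ∑ k ∈ s, (𝐞 (n * u k) : ℂ)).re / (π * n) ^ 2| ≤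
        A * (min |b| (1 / n) / √n) + E * |b| * (1 / n ^ 2) := by
    rcases eq_or_ne n 0 with rfl | hn
    · simp
    have hn' : (0 : ℝ) < n := by positivity
    calc _ ≤ ‖(𝐞 (n * b) : ℂ) - 1‖ * ‖∑ k ∈ s, (𝐞 (n * u k) : ℂ)‖ / (π * n) ^ 2 := by
          rw [abs_div, abs_of_nonneg (sq_nonneg (π * n)), ← norm_mul]
          gcongr
          exact Complex.abs_re_le_norm _
      _ = ‖(𝐞 (n * b) : ℂ) - 1‖ / (π * n) ^ 2 * ‖∑ k ∈ s, (𝐞 (n * u k) : ℂ)‖ :=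
          mul_div_right_comm ..
      _ ≤ min |b| (1 / n) / n * (A * √n + E / n) := by
          exact mul_le_mul (norm_fourierChar_sub_one_div_le n b) (hS n hn) (norm_nonneg _)
            (by positivity)
      _ = A * (min |b| (1 / n) / √n) + E * min |b| (1 / n) * (1 / n ^ 2) := by
          field_simp
          linear_combination (n * A) * Real.mul_self_sqrt hn'.le
      _ ≤ A * (min |b| (1 / n) / √n) + E * |b| * (1 / n ^ 2) := by
          gcongr
          exact min_le_left _ _
  have hzeta (N : ℕ) : ∑ n ∈ range N, 1 / (n : ℝ) ^ 2 ≤ 2 := by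
    refine (sum_le_hasSum _ (fun n _ ↦ by positivity) hasSum_zeta_two).trans ?_
    nlinarith [Real.pi_lt_d2, Real.pi_pos]
  refine le_of_tendsto' (hasSum_sum_bernoulliFun_two_fract_sub s u b).tendsto_sum_nat.abs fun N ↦ ?_
  calc _ ≤ ∑ n ∈ range N, (A * (min |b| (1 / n) / √n) + E * |b| * (1 / n ^ 2)) :=
        (abs_sum_le_sum_abs _ _).trans (sum_le_sum fun n _ ↦ hterm n)
    _ = A * ∑ n ∈ range N, min |b| (1 / n) / √n + E * |b| * ∑ n ∈ range N, 1 / (n : ℝ) ^ 2 := by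
        rw [sum_add_distrib, mul_sum, mul_sum]
    _ ≤ A * (8 * √|b|) + E * |b| * 2 := by
        gcongr
        exacts [sum_range_min_one_div_div_sqrt_le (abs_pos.mpr hb) N, hzeta N]
    _ = _ := by ring

theorem abs_sum_fract_sub_half_le (hA : 0 ≤ A) (hE : 0 ≤ E)
    (hS : ∀ n : ℕ, n ≠ 0 → ‖∑ k ∈ s, (𝐞 (n * u k) : ℂ)‖ ≤ A * √n + E / n) {η : ℝ} (hη : 0 < η) :
    |∑ k ∈ s, (Int.fract (u k) - 1 / 2)| ≤ #s * η + 4 * A / √η + E := by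
  have hup := abs_le.mp (abs_sum_bernoulliFun_two_fract_sub_le hA hE hS hη.ne')
  have hdown := abs_le.mp (abs_sum_bernoulliFun_two_fract_sub_le hA hE hS (neg_ne_zero.mpr hη.ne'))
  rw [abs_neg] at hdown
  rw [abs_of_pos hη] at hup hdown
  have hlower : ∑ k ∈ s, (bernoulliFun 2 (Int.fract (u k + η)) - bernoulliFun 2 (Int.fract (u k)))
      ≤ 2 * η * (∑ k ∈ s, (Int.fract (u k) - 1 / 2) + #s * η) := by
    rw [← nsmul_eq_mul, ← sum_const, ← sum_add_distrib, mul_sum]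
    exact sum_le_sum fun k _ ↦ (bernoulliFun_two_fract_add_sub_mem_Icc (u k) hη.le).2
  have hupper : 2 * η * (∑ k ∈ s, (Int.fract (u k) - 1 / 2) - #s * η) ≤
      -∑ k ∈ s, (bernoulliFun 2 (Int.fract (u k + -η)) - bernoulliFun 2 (Int.fract (u k))) := by
    rw [← nsmul_eq_mul, ← sum_const, ← sum_sub_distrib, mul_sum, ← sum_neg_distrib]
    refine sum_le_sum fun k _ ↦ ?_
    have := (bernoulliFun_two_fract_add_sub_mem_Icc (u k + -η) hη.le).1
    rw [neg_add_cancel_right] at this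
    linarith
  have hbound : 8 * A * √η + 2 * E * η = 2 * η * (4 * A / √η + E) := by
    have : 0 < √η := by positivity
    field_simp
    linear_combination 8 * A * Real.mul_self_sqrt hη.le
  rw [hbound] at hup hdown
  have h2η : 0 < 2 * η := by positivity
  refine abs_le.mpr ⟨?_, ?_⟩ <;> refine le_of_mul_le_mul_left ?_ h2η <;> linarith

end Sawtooth

/-! ### The Kusmin–Landau inequality -/

lemma four_mul_abs_sub_round_le_norm_fourierChar_sub_one (t : ℝ) :
    4 * |t - round t| ≤ ‖(𝐞 t : ℂ) - 1‖ := by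
  have hround := abs_sub_round t
  have hle : |π * (t - round t)| ≤ π / 2 := by
    rw [abs_mul, abs_of_pos Real.pi_pos]
    nlinarith [Real.pi_pos]
  have hsin : |Real.sin (π * t)| = |Real.sin (π * (t - round t))| := by
    rw [mul_sub, mul_comm π (round t : ℝ), Real.sin_sub_int_mul_pi, abs_mul, abs_zpow, abs_neg,
      abs_one, one_zpow, one_mul]
  calc 4 * |t - round t| = 2 * (2 / π * |π * (t - round t)|) := by
        rw [abs_mul, abs_of_pos Real.pi_pos]
        field_simp
        ring
    _ ≤ 2 * |Real.sin (π * (t - round t))| := by gcongr; exact Real.mul_abs_le_abs_sin hle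
    _ = ‖(𝐞 t : ℂ) - 1‖ := by rw [norm_fourierChar_sub_one, hsin]

lemma le_abs_sub_round_of_mem_Icc {θ t : ℝ} {j : ℤ} (ht : t ∈ Set.Icc (j + θ) (j + 1 - θ)) :
    θ ≤ |t - round t| := by
  rcases le_or_gt (round t) j with h | h
  · have : (round t : ℝ) ≤ j := by exact_mod_cast h
    exact le_abs.mpr (.inl (by linarith [ht.1]))
  · have : (j + 1 : ℝ) ≤ round t := by exact_mod_cast h
    exact le_abs.mpr (.inr (by linarith [ht.2]))

lemma norm_inv_fourierChar_sub_one_le {θ t : ℝ} {j : ℤ} (hθ : 0 < θ)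
    (ht : t ∈ Set.Icc (j + θ) (j + 1 - θ)) : ‖((𝐞 t : ℂ) - 1)⁻¹‖ ≤ 1 / (4 * θ) := by
  rw [norm_inv, ← one_div]
  gcongr
  linarith [le_abs_sub_round_of_mem_Icc ht, four_mul_abs_sub_round_le_norm_fourierChar_sub_one t]

lemma fourierChar_eq_inv_mul_sub {a b : ℝ} (h : (𝐞 (b - a) : ℂ) - 1 ≠ 0) :
    (𝐞 a : ℂ) = ((𝐞 (b - a) : ℂ) - 1)⁻¹ * (𝐞 b - 𝐞 a) := by
  have hmul : (𝐞 b : ℂ) = 𝐞 (b - a) * 𝐞 a := by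
    rw [← Circle.coe_mul, ← AddChar.map_add_eq_mul, sub_add_cancel]
  rw [hmul, ← sub_one_mul, inv_mul_cancel_left₀ h]

lemma inv_fourierChar_sub_one {t : ℝ} (ht : Real.sin (π * t) ≠ 0) :
    ((𝐞 t : ℂ) - 1)⁻¹ = ⟨-1 / 2, -Real.cot (π * t) / 2⟩ := by
  have hcos : Real.cos (2 * π * t) = 1 - 2 * Real.sin (π * t) ^ 2 := by
    rw [mul_assoc, Real.cos_two_mul_eq_one_sub]
  have hsin : Real.sin (2 * π * t) = 2 * Real.sin (π * t) * Real.cos (π * t) := by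
    rw [mul_assoc, Real.sin_two_mul]
  have hpyth := Real.sin_sq_add_cos_sq (π * t)
  refine inv_eq_of_mul_eq_one_right (Complex.ext ?_ ?_) <;>
    simp only [Real.fourierChar_apply, Complex.mul_re, Complex.mul_im, Complex.sub_re,
      Complex.sub_im, Complex.exp_ofReal_mul_I_re, Complex.exp_ofReal_mul_I_im, Complex.one_re,
      Complex.one_im, Real.cot_eq_cos_div_sin, hcos, hsin] <;>
    field_simp
  · linear_combination 2 * Real.sin (π * t) * hpyth
  · ring

lemma neg_one_zpow_mul_sin_pi_mul_pos {j : ℤ} {t : ℝ} (ht : t ∈ Set.Ioo (j : ℝ) (j + 1)) :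
    0 < (-1) ^ j * Real.sin (π * t) := by
  rw [← Real.sin_sub_int_mul_pi]
  apply Real.sin_pos_of_pos_of_lt_pi <;> nlinarith [Real.pi_pos, ht.1, ht.2]

lemma antitoneOn_cot_pi_mul (j : ℤ) :
    AntitoneOn (fun t ↦ Real.cot (π * t)) (Set.Ioo (j : ℝ) (j + 1)) := by
  intro a ha b hb hab
  have hprod : 0 < Real.sin (π * a) * Real.sin (π * b) := by
    have := mul_pos (neg_one_zpow_mul_sin_pi_mul_pos ha) (neg_one_zpow_mul_sin_pi_mul_pos hb)
    rwa [mul_mul_mul_comm, ← mul_zpow, neg_one_mul, neg_neg, one_zpow, one_mul] at this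
  have hsub : 0 ≤ Real.sin (π * b - π * a) := by
    apply Real.sin_nonneg_of_nonneg_of_le_pi <;> nlinarith [Real.pi_pos, ha.1, hb.2]
  have heq : Real.cot (π * a) - Real.cot (π * b) =
      Real.sin (π * b - π * a) / (Real.sin (π * a) * Real.sin (π * b)) := by
    rw [Real.cot_eq_cos_div_sin, Real.cot_eq_cos_div_sin,
      div_sub_div _ _ (left_ne_zero_of_mul hprod.ne') (right_ne_zero_of_mul hprod.ne'),
      Real.sin_sub]
    ring
  exact sub_nonneg.mp (heq ▸ div_nonneg hsub hprod.le)

lemma norm_inv_fourierChar_sub_one_sub_inv {j : ℤ} {a b : ℝ} (ha : a ∈ Set.Ioo (j : ℝ) (j + 1))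
    (hb : b ∈ Set.Ioo (j : ℝ) (j + 1)) (hab : a ≤ b) :
    ‖((𝐞 b : ℂ) - 1)⁻¹ - ((𝐞 a : ℂ) - 1)⁻¹‖ =
      ((𝐞 b : ℂ) - 1)⁻¹.im - ((𝐞 a : ℂ) - 1)⁻¹.im := by
  have hcot : Real.cot (π * b) ≤ Real.cot (π * a) := antitoneOn_cot_pi_mul j ha hb hab
  rw [inv_fourierChar_sub_one (right_ne_zero_of_mul (neg_one_zpow_mul_sin_pi_mul_pos ha).ne'),
    inv_fourierChar_sub_one (right_ne_zero_of_mul (neg_one_zpow_mul_sin_pi_mul_pos hb).ne'),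
    ← dist_eq_norm, Complex.dist_of_re_eq (by rfl), Real.dist_eq, abs_of_nonneg (by linarith)]

theorem sum_range_succ_mul_sub {R : Type*} [Ring R] (c e : ℕ → R) (n : ℕ) :
    ∑ k ∈ range (n + 1), c k * (e (k + 1) - e k) =
      c n * e (n + 1) - c 0 * e 0 - ∑ k ∈ range n, (c (k + 1) - c k) * e (k + 1) := by
  induction n with
  | zero => simp [mul_sub]
  | succ n ih =>
    rw [sum_range_succ, ih, sum_range_succ _ n]
    noncomm_ring

theorem norm_sum_range_succ_mul_sub_le {R : Type*} [SeminormedRing R] (c : ℕ → R) {e : ℕ → R}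
    (he : ∀ k, ‖e k‖ ≤ 1) (n : ℕ) :
    ‖∑ k ∈ range (n + 1), c k * (e (k + 1) - e k)‖ ≤
      ‖c n‖ + ‖c 0‖ + ∑ k ∈ range n, ‖c (k + 1) - c k‖ := by
  have hmul (a : R) (k : ℕ) : ‖a * e k‖ ≤ ‖a‖ :=
    (norm_mul_le _ _).trans (mul_le_of_le_one_right (norm_nonneg _) (he k))
  rw [sum_range_succ_mul_sub]
  refine (norm_sub_le _ _).trans (add_le_add ((norm_sub_le _ _).trans ?_) ?_)
  · exact add_le_add (hmul _ _) (hmul _ _)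
  · exact norm_sum_le_of_le _ fun k _ ↦ hmul _ _

lemma norm_sum_range_fourierChar_le {G : ℕ → ℝ} {n : ℕ} {j : ℤ} {θ : ℝ} (hθ : 0 < θ)
    (hmono : MonotoneOn (Δ_[1] G) (range (n + 1)))
    (hmaps : Set.MapsTo (Δ_[1] G) (range (n + 1)) (Set.Icc (j + θ) (j + 1 - θ))) :
    ‖∑ k ∈ range (n + 1), (𝐞 (G k) : ℂ)‖ ≤ 1 / θ := by
  obtain ⟨c, hc⟩ : ∃ c : ℕ → ℂ, ∀ k, c k = ((𝐞 (Δ_[1] G k) : ℂ) - 1)⁻¹ := ⟨_, fun _ ↦ rfl⟩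
  have hIoo {k : ℕ} (hk : k ∈ range (n + 1)) : Δ_[1] G k ∈ Set.Ioo (j : ℝ) (j + 1) :=
    ⟨by linarith [(hmaps hk).1], by linarith [(hmaps hk).2]⟩
  have hterm : ∀ k ∈ range (n + 1), (𝐞 (G k) : ℂ) = c k * ((𝐞 (G (k + 1)) : ℂ) - 𝐞 (G k)) := by
    intro k hk
    have := right_ne_zero_of_mul (neg_one_zpow_mul_sin_pi_mul_pos (hIoo hk)).ne'
    have hne : (𝐞 (Δ_[1] G k) : ℂ) - 1 ≠ 0 := by
      rw [← norm_ne_zero_iff, norm_fourierChar_sub_one]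
      positivity
    rw [hc]
    exact fourierChar_eq_inv_mul_sub hne
  -- The `c k` lie on the line `re = -1 / 2` and move along it in one direction, so their total
  -- variation telescopes.
  have hvar : ∀ k ∈ range n, ‖c (k + 1) - c k‖ = (c (k + 1)).im - (c k).im := by
    intro k hk
    have hk₀ : k ∈ range (n + 1) := by grind
    have hk₁ : k + 1 ∈ range (n + 1) := by grind
    rw [hc, hc]
    exact norm_inv_fourierChar_sub_one_sub_inv (hIoo hk₀) (hIoo hk₁) (hmono hk₀ hk₁ k.le_succ)
  have hnorm {k : ℕ} (hk : k ∈ range (n + 1)) : ‖c k‖ ≤ 1 / (4 * θ) :=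
    hc k ▸ norm_inv_fourierChar_sub_one_le hθ (hmaps hk)
  calc ‖∑ k ∈ range (n + 1), (𝐞 (G k) : ℂ)‖
      ≤ ‖c n‖ + ‖c 0‖ + ∑ k ∈ range n, ‖c (k + 1) - c k‖ := by
        rw [sum_congr rfl hterm]
        exact norm_sum_range_succ_mul_sub_le c (e := fun k ↦ 𝐞 (G k))
          (fun k ↦ (Circle.norm_coe _).le) n
    _ = ‖c n‖ + ‖c 0‖ + ((c n).im - (c 0).im) := by
        rw [sum_congr rfl hvar, sum_range_sub (fun k ↦ (c k).im) n]
    _ ≤ ‖c n‖ + ‖c 0‖ + (‖c n‖ + ‖c 0‖) := by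
        linarith [(abs_le.mp (Complex.abs_im_le_norm (c n))).2,
          (abs_le.mp (Complex.abs_im_le_norm (c 0))).1]
    _ ≤ 4 * (1 / (4 * θ)) := by
        linarith [hnorm (k := n) (by simp), hnorm (k := 0) (by simp)]
    _ = 1 / θ := by field_simp

lemma exists_eq_Ico_add_of_ordConnected {s : Finset ℕ} (hs : (s : Set ℕ).OrdConnected) :
    ∃ p n, s = Ico p (p + n) := by
  rcases s.eq_empty_or_nonempty with rfl | hne
  · exact ⟨0, 0, by simp⟩
  refine ⟨s.min' hne, s.max' hne + 1 - s.min' hne, Finset.ext fun k ↦ ?_⟩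
  have hle := s.min'_le_max' hne
  rw [mem_Ico]
  constructor
  · intro hk
    have := s.min'_le k hk
    have := s.le_max' k hk
    lia
  · intro hk
    exact hs.out (s.min'_mem hne) (s.max'_mem hne) ⟨hk.1, by lia⟩

theorem norm_sum_fourierChar_le_of_fwdDiff_mem_Icc {s : Finset ℕ} (hs : (s : Set ℕ).OrdConnected)
    {G : ℕ → ℝ} {j : ℤ} {θ : ℝ} (hθ : 0 < θ) (hmono : MonotoneOn (Δ_[1] G) s)
    (hmaps : Set.MapsTo (Δ_[1] G) s (Set.Icc (j + θ) (j + 1 - θ))) :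
    ‖∑ k ∈ s, (𝐞 (G k) : ℂ)‖ ≤ 1 / θ := by
  obtain ⟨p, n, rfl⟩ := exists_eq_Ico_add_of_ordConnected hs
  rw [sum_Ico_eq_sum_range, add_tsub_cancel_left]
  rcases n with - | n
  · simpa using hθ.le
  have hshift {k : ℕ} (hk : k ∈ range (n + 1)) : p + k ∈ Ico p (p + (n + 1)) := by
    rw [mem_range] at hk
    exact mem_Ico.mpr ⟨by lia, by lia⟩
  exact norm_sum_range_fourierChar_le (G := fun k ↦ G (p + k)) hθ
    (fun k hk l hl hkl ↦ hmono (hshift hk) (hshift hl) (by lia)) fun k hk ↦ hmaps (hshift hk)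

/-! ### The second derivative test -/

theorem card_le_of_monotoneOn_sub_mul {s : Finset ℕ} {a : ℕ → ℝ} {l β θ : ℝ} (hl : 0 < l)
    (hθ : 0 ≤ θ) (hmono : MonotoneOn (fun k ↦ a k - l * k) s)
    (hmaps : Set.MapsTo a s (Set.Icc β (β + θ))) : #s ≤ θ / l + 1 := by
  rcases s.eq_empty_or_nonempty with rfl | hne
  · simp only [card_empty, Nat.cast_zero]
    positivity
  have hmin := s.min'_mem hne
  have hmax := s.max'_mem hne
  have hcard : #s + s.min' hne ≤ s.max' hne + 1 := by
    have hsub : s ⊆ Icc (s.min' hne) (s.max' hne) :=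
      fun k hk ↦ mem_Icc.mpr ⟨s.min'_le k hk, s.le_max' k hk⟩
    have := card_le_card hsub
    rw [Nat.card_Icc] at this
    have := s.min'_le_max' hne
    lia
  have hcard' : (#s : ℝ) + s.min' hne ≤ s.max' hne + 1 := by exact_mod_cast hcard
  have hgrowth : a (s.min' hne) - l * s.min' hne ≤ a (s.max' hne) - l * s.max' hne :=
    hmono hmin hmax (s.min'_le_max' hne)
  have hlen : ((s.max' hne : ℝ) - s.min' hne) ≤ θ / l := by
    rw [le_div_iff₀ hl]
    linarith [(hmaps hmin).1, (hmaps hmax).2]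
  linarith

theorem card_sdiff_filter_mem_Icc_le_of_monotoneOn_sub_mul {s : Finset ℕ} {a : ℕ → ℝ}
    {l β γ θ : ℝ} [DecidablePred (a · ∈ Set.Icc (β + θ) (γ - θ))] (hl : 0 < l) (hθ : 0 ≤ θ)
    (hmono : MonotoneOn (fun k ↦ a k - l * k) s) (hmaps : Set.MapsTo a s (Set.Icc β γ)) :
    #(s \ {k ∈ s | a k ∈ Set.Icc (β + θ) (γ - θ)}) ≤ 2 * (θ / l + 1) := by
  classical
  have hcluster (β : ℝ) : #{k ∈ s | a k ∈ Set.Icc β (β + θ)} ≤ θ / l + 1 :=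
    card_le_of_monotoneOn_sub_mul hl hθ (hmono.mono (filter_subset _ _))
      fun k hk ↦ (mem_filter.mp hk).2
  have hsub : s \ {k ∈ s | a k ∈ Set.Icc (β + θ) (γ - θ)} ⊆
      {k ∈ s | a k ∈ Set.Icc β (β + θ)} ∪ {k ∈ s | a k ∈ Set.Icc (γ - θ) (γ - θ + θ)} := by
    intro k hk
    have hk' := hmaps (mem_sdiff.mp hk).1
    simp only [mem_sdiff, mem_filter, mem_union, Set.mem_Icc] at hk hk' ⊢
    grind
  have hcard := (Nat.cast_le (α := ℝ)).mpr ((card_le_card hsub).trans (card_union_le _ _))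
  rw [Nat.cast_add] at hcard
  linarith [hcluster β, hcluster (γ - θ)]

lemma ordConnected_sep_mem {α β : Type*} [Preorder α] [Preorder β] {s : Set α} {a : α → β}
    {t : Set β} (hs : s.OrdConnected) (ha : MonotoneOn a s) (ht : t.OrdConnected) :
    {k ∈ s | a k ∈ t}.OrdConnected := by
  refine Set.ordConnected_def.mpr fun x hx y hy k hk ↦ ?_
  have hks : k ∈ s := hs.out hx.1 hy.1 hk
  exact ⟨hks, ht.out hx.2 hy.2 ⟨ha hx.1 hks hk.1, ha hks hy.1 hk.2⟩⟩

lemma norm_sum_fourierChar_le_card {ι : Type*} (s : Finset ι) (G : ι → ℝ) :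
    ‖∑ k ∈ s, (𝐞 (G k) : ℂ)‖ ≤ #s :=
  (norm_sum_le_of_le s fun k _ ↦ (Circle.norm_coe (𝐞 (G k))).le).trans_eq (by simp)

section SecondDerivativeTest

variable {s : Finset ℕ} {G : ℕ → ℝ} {l : ℝ}

lemma monotoneOn_of_monotoneOn_sub_mul {a : ℕ → ℝ} (hl : 0 ≤ l)
    (hmono : MonotoneOn (fun k ↦ a k - l * k) s) : MonotoneOn a s := by
  intro x hx y hy hxy
  have hle : a x - l * x ≤ a y - l * y := hmono hx hy hxy
  have : l * x ≤ l * y := by gcongr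
  linarith

-- The terms with `Δ_[1] G k` within `√l / 2` of an integer are few; the others are summed by the
-- Kusmin–Landau inequality.
lemma norm_sum_fourierChar_le_of_fwdDiff_mem_Icc_int {j : ℤ} (hs : (s : Set ℕ).OrdConnected)
    (hl : 0 < l) (hl1 : l ≤ 1) (hmono : MonotoneOn (fun k ↦ Δ_[1] G k - l * k) s)
    (hmaps : Set.MapsTo (Δ_[1] G) s (Set.Icc j (j + 1))) :
    ‖∑ k ∈ s, (𝐞 (G k) : ℂ)‖ ≤ 5 / √l := by
  classical
  set θ := √l / 2 with hθ
  have hθ0 : 0 < θ := by positivity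
  set mid := {k ∈ s | Δ_[1] G k ∈ Set.Icc (j + θ) (j + 1 - θ)}
  have hmono' := monotoneOn_of_monotoneOn_sub_mul hl.le hmono
  have hmid : ‖∑ k ∈ mid, (𝐞 (G k) : ℂ)‖ ≤ 1 / θ := by
    refine norm_sum_fourierChar_le_of_fwdDiff_mem_Icc (j := j) ?_ hθ0
      (hmono'.mono (filter_subset _ _)) fun k hk ↦ (mem_filter.mp hk).2
    rw [coe_filter]
    exact ordConnected_sep_mem hs hmono' Set.ordConnected_Icc
  have hθl : θ / l = 1 / (2 * √l) := by
    rw [hθ]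
    field_simp
    exact Real.sq_sqrt hl.le
  calc ‖∑ k ∈ s, (𝐞 (G k) : ℂ)‖
      ≤ ‖∑ k ∈ s \ mid, (𝐞 (G k) : ℂ)‖ + ‖∑ k ∈ mid, (𝐞 (G k) : ℂ)‖ := by
        rw [← sum_sdiff (filter_subset _ s : mid ⊆ s)]
        exact norm_add_le _ _
    _ ≤ 2 * (θ / l + 1) + 1 / θ :=
        add_le_add ((norm_sum_fourierChar_le_card _ _).trans
          (card_sdiff_filter_mem_Icc_le_of_monotoneOn_sub_mul hl hθ0.le hmono hmaps)) hmid
    _ ≤ 2 * (1 / (2 * √l) + 1 / √l) + 1 / θ := by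
        rw [hθl]
        gcongr
        exact (one_le_div (by positivity)).mpr (Real.sqrt_le_one.mpr hl1)
    _ = 5 / √l := by
        rw [hθ]
        field_simp
        norm_num

theorem norm_sum_fourierChar_le_of_monotoneOn_fwdDiff_sub_mul {α R : ℝ}
    (hs : (s : Set ℕ).OrdConnected) (hl : 0 < l) (hl1 : l ≤ 1) (hR : 0 ≤ R)
    (hmono : MonotoneOn (fun k ↦ Δ_[1] G k - l * k) s)
    (hmaps : Set.MapsTo (Δ_[1] G) s (Set.Icc α (α + R))) :
    ‖∑ k ∈ s, (𝐞 (G k) : ℂ)‖ ≤ 5 * (R + 2) / √l := by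
  have hfloor : ∀ k ∈ s, ⌊Δ_[1] G k⌋ ∈ Icc ⌊α⌋ ⌊α + R⌋ := fun k hk ↦
    mem_Icc.mpr ⟨Int.floor_le_floor (hmaps hk).1, Int.floor_le_floor (hmaps hk).2⟩
  have hcard : (#(Icc ⌊α⌋ ⌊α + R⌋) : ℝ) ≤ R + 2 := by
    have hle : ⌊α⌋ ≤ ⌊α + R⌋ + 1 := (Int.floor_le_floor (le_add_of_nonneg_right hR)).trans (by lia)
    have : (#(Icc ⌊α⌋ ⌊α + R⌋) : ℝ) = ⌊α + R⌋ + 1 - ⌊α⌋ := by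
      exact_mod_cast Int.card_Icc_of_le _ _ hle
    linarith [Int.floor_le (α + R), Int.lt_floor_add_one α]
  have hfiber (j : ℤ) : ‖∑ k ∈ s with ⌊Δ_[1] G k⌋ = j, (𝐞 (G k) : ℂ)‖ ≤ 5 / √l := by
    refine norm_sum_fourierChar_le_of_fwdDiff_mem_Icc_int (j := j) ?_ hl hl1
      (hmono.mono (filter_subset _ _)) fun k hk ↦ ?_
    · rw [coe_filter]
      exact ordConnected_sep_mem (a := fun k ↦ ⌊Δ_[1] G k⌋) (t := {j}) hs
        (Int.floor_mono.comp_monotoneOn (monotoneOn_of_monotoneOn_sub_mul hl.le hmono))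
        Set.ordConnected_singleton
    · obtain ⟨h₁, h₂⟩ := Int.floor_eq_iff.mp (mem_filter.mp hk).2
      exact ⟨h₁, h₂.le⟩
  rw [← sum_fiberwise_of_maps_to hfloor]
  calc _ ≤ ∑ j ∈ Icc ⌊α⌋ ⌊α + R⌋, 5 / √l := norm_sum_le_of_le _ fun j _ ↦ hfiber j
    _ = #(Icc ⌊α⌋ ⌊α + R⌋) * (5 / √l) := by rw [sum_const, nsmul_eq_mul]
    _ ≤ (R + 2) * (5 / √l) := by gcongr
    _ = 5 * (R + 2) / √l := by ring

end SecondDerivativeTest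

/-! ### The points `x / (m * k + δ)` -/

section Hyperbola

variable {s : Finset ℕ} {m δ D z : ℝ}

lemma fwdDiff_div_mul_add {k : ℕ} (hk : m * k + δ ≠ 0) (hk' : m * k + δ + m ≠ 0) :
    Δ_[1] (fun k : ℕ ↦ z / (m * k + δ)) k = -(z * m / ((m * k + δ) * (m * k + δ + m))) := by
  have hsucc : m * ((k + 1 : ℕ) : ℝ) + δ = m * k + δ + m := by push_cast; ring
  rw [fwdDiff, hsucc]
  field_simp
  ring

lemma fwdDiff_div_mul_add_mem_Icc (hm : 0 < m) (hmD : m ≤ 2 * D) (hz : 0 < z) {k : ℕ}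
    (hk : m * k + δ ∈ Set.Icc D (3 * D)) :
    Δ_[1] (fun k : ℕ ↦ z / (m * k + δ)) k ∈
      Set.Icc (-(z * m / D ^ 2)) (-(z * m / D ^ 2 / 15)) := by
  obtain ⟨hlo, hhi⟩ := hk
  have hD : 0 < D := by linarith
  rw [fwdDiff_div_mul_add (by linarith) (by linarith), div_div]
  constructor <;> refine neg_le_neg (div_le_div_of_nonneg_left (by positivity) ?_ ?_)
  · positivity
  · nlinarith
  · nlinarith
  · nlinarith

lemma monotoneOn_fwdDiff_div_mul_add_sub_mul (hs : (s : Set ℕ).OrdConnected) (hm : 0 < m)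
    (hmD : m ≤ 2 * D) (hz : 0 < z)
    (hmaps : Set.MapsTo (fun k : ℕ ↦ m * k + δ) s (Set.Icc D (3 * D))) :
    MonotoneOn
      (fun k ↦ Δ_[1] (fun k : ℕ ↦ z / (m * k + δ)) k - z * m ^ 2 / (64 * D ^ 3) * k) s := by
  have hD : 0 < D := by linarith
  refine monotoneOn_of_le_add_one hs fun k _ hk _ ↦ ?_
  obtain ⟨hlo, hhi⟩ : m * k + δ ∈ Set.Icc D (3 * D) := hmaps hk
  have hsucc : m * ((k + 1 : ℕ) : ℝ) + δ = m * k + δ + m := by push_cast; ring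
  rw [fwdDiff_div_mul_add (by linarith) (by linarith),
    fwdDiff_div_mul_add (by linarith) (by linarith), hsucc]
  set y := m * k + δ
  have hy : 0 < y := by linarith
  have hdiff : z * m / (y * (y + m)) - z * m / ((y + m) * (y + m + m)) =
      2 * z * m ^ 2 / (y * (y + m) * (y + m + m)) := by
    field_simp
    ring
  have hle : z * m ^ 2 / (64 * D ^ 3) ≤ 2 * z * m ^ 2 / (y * (y + m) * (y + m + m)) := by
    calc z * m ^ 2 / (64 * D ^ 3) = 2 * z * m ^ 2 / (128 * D ^ 3) := by field_simp; norm_num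
      _ ≤ 2 * z * m ^ 2 / (105 * D ^ 3) := by gcongr; norm_num
      _ = 2 * z * m ^ 2 / (3 * D * (3 * D + 2 * D) * (3 * D + 2 * D + 2 * D)) := by
        congr 1
        ring
      _ ≤ _ := by gcongr
  push_cast
  linarith

lemma card_le_of_mul_add_mem_Icc (hm : 0 < m) (hmD : m ≤ 2 * D)
    (hmaps : Set.MapsTo (fun k : ℕ ↦ m * k + δ) s (Set.Icc D (3 * D))) : #s ≤ 4 * D / m := by
  have hcard : (#s : ℝ) ≤ 2 * D / m + 1 := by
    refine card_le_of_monotoneOn_sub_mul hm (by linarith) (fun k _ l _ _ ↦ ?_)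
      (hmaps.mono_right (Set.Icc_subset_Icc_right (by linarith : 3 * D ≤ D + 2 * D)))
    simp
  have hone : 1 ≤ 2 * D / m := (one_le_div hm).mpr hmD
  calc (#s : ℝ) ≤ 2 * D / m + 2 * D / m := by linarith
    _ = 4 * D / m := by ring

lemma norm_sum_fourierChar_div_mul_add_le_of_le_half (hs : (s : Set ℕ).OrdConnected) (hm : 0 < m)
    (hmD : m ≤ 2 * D) (hz : 0 < z)
    (hmaps : Set.MapsTo (fun k : ℕ ↦ m * k + δ) s (Set.Icc D (3 * D)))
    (hsmall : z * m / D ^ 2 ≤ 1 / 2) :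
    ‖∑ k ∈ s, (𝐞 (z / (m * k + δ)) : ℂ)‖ ≤ 15 * D ^ 2 / (z * m) := by
  have hD : 0 < D := by linarith
  have hmono := monotoneOn_fwdDiff_div_mul_add_sub_mul hs hm hmD hz hmaps
  have hΔ : Set.MapsTo (Δ_[1] fun k : ℕ ↦ z / (m * k + δ)) s
      (Set.Icc ((-1 : ℤ) + z * m / D ^ 2 / 15) ((-1 : ℤ) + 1 - z * m / D ^ 2 / 15)) := by
    intro k hk
    have := fwdDiff_div_mul_add_mem_Icc hm hmD hz (hmaps hk)
    refine Set.Icc_subset_Icc ?_ ?_ this <;> push_cast <;> linarith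
  calc _ ≤ 1 / (z * m / D ^ 2 / 15) :=
        norm_sum_fourierChar_le_of_fwdDiff_mem_Icc hs (by positivity)
          (monotoneOn_of_monotoneOn_sub_mul (by positivity) hmono) hΔ
    _ = 15 * D ^ 2 / (z * m) := by field_simp

lemma norm_sum_fourierChar_div_mul_add_le_of_half_lt (hs : (s : Set ℕ).OrdConnected) (hm : 0 < m)
    (hmD : m ≤ 2 * D) (hz : 0 < z)
    (hmaps : Set.MapsTo (fun k : ℕ ↦ m * k + δ) s (Set.Icc D (3 * D)))
    (hlarge : 1 / 2 < z * m / D ^ 2) :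
    ‖∑ k ∈ s, (𝐞 (z / (m * k + δ)) : ℂ)‖ ≤ 200 * √(z / D) := by
  have hD : 0 < D := by linarith
  set μ := z * m / D ^ 2 with hμ
  set l := z * m ^ 2 / (64 * D ^ 3) with hl
  have hl0 : 0 < l := by positivity
  have hμl : μ = 64 * (D / m) * l := by rw [hμ, hl]; field_simp
  have hsqrt : √(z / D) = 8 * (D / m) * √l := by
    rw [← Real.sqrt_sq (by positivity : 0 ≤ 8 * (D / m)), ← Real.sqrt_mul (by positivity), hl]
    congr 1
    field_simp
    norm_num
  rcases le_or_gt l 1 with hl1 | hl1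
  · have hΔ : Set.MapsTo (Δ_[1] fun k : ℕ ↦ z / (m * k + δ)) s (Set.Icc (-μ) (-μ + μ)) :=
      fun k hk ↦ Set.Icc_subset_Icc_right (by linarith)
        (fwdDiff_div_mul_add_mem_Icc hm hmD hz (hmaps hk))
    calc _ ≤ 5 * (μ + 2) / √l :=
          norm_sum_fourierChar_le_of_monotoneOn_fwdDiff_sub_mul hs hl0 hl1 (by positivity)
            (monotoneOn_fwdDiff_div_mul_add_sub_mul hs hm hmD hz hmaps) hΔ
      _ ≤ 25 * μ / √l := div_le_div_of_nonneg_right (by linarith) (Real.sqrt_nonneg l)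
      _ = 200 * √(z / D) := by
        rw [hμl, hsqrt]
        field_simp
        linear_combination -1600 * Real.sq_sqrt hl0.le
  · calc _ ≤ (#s : ℝ) := norm_sum_fourierChar_le_card _ _
      _ ≤ 4 * D / m := card_le_of_mul_add_mem_Icc hm hmD hmaps
      _ = 4 * (D / m) * 1 := by ring
      _ ≤ 1600 * (D / m) * √l := by
        gcongr
        · norm_num
        · exact Real.one_le_sqrt.mpr hl1.le
      _ = 200 * √(z / D) := by rw [hsqrt]; ring

theorem norm_sum_fourierChar_div_mul_add_le (hs : (s : Set ℕ).OrdConnected) (hm : 0 < m)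
    (hmD : m ≤ 2 * D) (hz : 0 < z)
    (hmaps : Set.MapsTo (fun k : ℕ ↦ m * k + δ) s (Set.Icc D (3 * D))) :
    ‖∑ k ∈ s, (𝐞 (z / (m * k + δ)) : ℂ)‖ ≤ 200 * √(z / D) + 15 * D ^ 2 / (z * m) := by
  rcases le_or_gt (z * m / D ^ 2) (1 / 2) with hsmall | hlarge
  · exact (norm_sum_fourierChar_div_mul_add_le_of_le_half hs hm hmD hz hmaps hsmall).trans
      (le_add_of_nonneg_left (by positivity))
  · exact (norm_sum_fourierChar_div_mul_add_le_of_half_lt hs hm hmD hz hmaps hlarge).trans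
      (le_add_of_nonneg_right (by positivity))

theorem abs_sum_fract_div_mul_add_sub_half_le {x : ℝ} (hs : (s : Set ℕ).OrdConnected) (hm : 0 < m)
    (hmD : m ≤ 2 * D) (hx : 0 < x)
    (hmaps : Set.MapsTo (fun k : ℕ ↦ m * k + δ) s (Set.Icc D (3 * D))) :
    |∑ k ∈ s, (Int.fract (x / (m * k + δ)) - 1 / 2)| ≤
      804 * (x / m) ^ (1 / 3 : ℝ) + 15 * D ^ 2 / (x * m) := by
  have hD : 0 < D := by linarith
  set Y := (x / m) ^ (1 / 3 : ℝ) with hY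
  have hY0 : 0 < Y := by positivity
  have hYx : Y ^ 3 = x / m := by
    rw [hY, ← Real.rpow_natCast, ← Real.rpow_mul (by positivity)]
    norm_num
  -- With the shift `Y * m / D` both `η`-dependent terms of the bound are of size `Y`.
  have hshift : 4 * (200 * √(x / D)) / √(Y * m / D) = 800 * Y := by
    have : x / D = Y ^ 2 * (Y * m / D) := by
      rw [eq_div_iff hm.ne'] at hYx
      rw [← hYx]
      ring
    rw [this, Real.sqrt_mul (sq_nonneg Y), Real.sqrt_sq hY0.le]
    field_simp
    norm_num
  have hexp (n : ℕ) (hn : n ≠ 0) : ‖∑ k ∈ s, (𝐞 (n * (x / (m * k + δ))) : ℂ)‖ ≤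
      200 * √(x / D) * √n + 15 * D ^ 2 / (x * m) / n := by
    have hn' : (0 : ℝ) < n := by positivity
    calc _ = ‖∑ k ∈ s, (𝐞 (n * x / (m * k + δ)) : ℂ)‖ := by simp_rw [mul_div_assoc]
      _ ≤ 200 * √(n * x / D) + 15 * D ^ 2 / (n * x * m) :=
        norm_sum_fourierChar_div_mul_add_le hs hm hmD (mul_pos hn' hx) hmaps
      _ = 200 * √(x / D) * √n + 15 * D ^ 2 / (x * m) / n := by
        rw [mul_div_assoc (n : ℝ) x, Real.sqrt_mul hn'.le]
        ring
  calc _ ≤ #s * (Y * m / D) + 4 * (200 * √(x / D)) / √(Y * m / D) + 15 * D ^ 2 / (x * m) :=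
        abs_sum_fract_sub_half_le (by positivity) (by positivity) hexp (by positivity)
    _ ≤ 4 * D / m * (Y * m / D) + 800 * Y + 15 * D ^ 2 / (x * m) := by
        rw [hshift]
        gcongr
        exact card_le_of_mul_add_mem_Icc hm hmD hmaps
    _ = 804 * Y + 15 * D ^ 2 / (x * m) := by
        field_simp
        ring

end Hyperbola

/-! ### Summation over `d = m * k` -/

theorem sum_Ioc_sum_divisors {M : Type*} [AddCommMonoid M] (a b : ℕ) (φ : ℕ → ℕ → M) :
    ∑ n ∈ Ioc a b, ∑ m ∈ n.divisors, φ m n =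
      ∑ m ∈ Ioc 0 b, ∑ k ∈ Ioc (a / m) (b / m), φ m (m * k) := by
  have hswap (n m : ℕ) :
      n ∈ Ioc a b ∧ m ∈ n.divisors ↔ n ∈ {n ∈ Ioc a b | m ∣ n} ∧ m ∈ Ioc 0 b := by
    simp only [mem_Ioc, Nat.mem_divisors, mem_filter]
    refine ⟨fun ⟨hn, hmn, _⟩ ↦ ⟨⟨hn, hmn⟩, Nat.pos_of_dvd_of_pos hmn (by lia), ?_⟩,
      fun ⟨⟨hn, hmn⟩, _⟩ ↦ ⟨hn, hmn, by lia⟩⟩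
    exact (Nat.le_of_dvd (by lia) hmn).trans hn.2
  rw [sum_comm' hswap]
  refine sum_congr rfl fun m hm ↦ ?_
  have hm0 : 0 < m := (mem_Ioc.mp hm).1
  have himage : {n ∈ Ioc a b | m ∣ n} = (Ioc (a / m) (b / m)).image (m * ·) := by
    ext n
    simp only [mem_filter, mem_Ioc, mem_image, Nat.div_lt_iff_lt_mul hm0,
      Nat.le_div_iff_mul_le hm0, dvd_iff_exists_eq_mul_right]
    constructor
    · rintro ⟨h, c, rfl⟩
      exact ⟨c, by rwa [mul_comm c m], rfl⟩
    · rintro ⟨c, h, rfl⟩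
      exact ⟨by rwa [mul_comm m c], c, rfl⟩
  rw [himage, sum_image (mul_right_injective₀ hm0.ne').injOn]

theorem sum_divisors_mul_div_div_self {K : Type*} [Field K] [CharZero K] (g : ℕ → K) (n : ℕ) :
    (∑ d ∈ n.divisors, (d : K) * g (n / d)) / n = ∑ m ∈ n.divisors, g m / m := by
  rw [sum_div, ← Nat.sum_div_divisors n fun m ↦ g m / m]
  refine sum_congr rfl fun d hd ↦ ?_
  obtain ⟨⟨e, rfl⟩, hn⟩ := Nat.mem_divisors.mp hd
  have hd0 : d ≠ 0 := left_ne_zero_of_mul hn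
  rw [Nat.mul_div_cancel_left e (Nat.pos_of_ne_zero hd0), Nat.cast_mul,
    mul_div_mul_left _ _ (Nat.cast_ne_zero.mpr hd0)]

theorem sum_Ioc_div_mul_eq {K : Type*} [Field K] [CharZero K] {f g : ℕ → K}
    (hf : ∀ n : ℕ, 1 ≤ n → f n = ∑ d ∈ n.divisors, (d : K) * g (n / d)) (ψ : ℕ → K) (a b : ℕ) :
    ∑ d ∈ Ioc a b, f d / d * ψ d =
      ∑ m ∈ Ioc 0 b, g m / m * ∑ k ∈ Ioc (a / m) (b / m), ψ (m * k) := by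
  simp_rw [mul_sum]
  rw [← sum_Ioc_sum_divisors a b fun m d ↦ g m / m * ψ d]
  refine sum_congr rfl fun d hd ↦ ?_
  rw [hf d (by grind), sum_divisors_mul_div_div_self, sum_mul]

lemma abs_sum_Ioc_fract_div_mul_add_sub_half_le {m : ℕ} {δ x D : ℝ} (hm : m ∈ Ioc 0 ⌊2 * D⌋₊)
    (hδ : 0 ≤ δ) (hδD : δ ≤ D) (hx : 0 < x) :
    |∑ k ∈ Ioc (⌊D⌋₊ / m) (⌊2 * D⌋₊ / m), (Int.fract (x / (m * k + δ)) - 1 / 2)| ≤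
      804 * (x / m) ^ (1 / 3 : ℝ) + 15 * D ^ 2 / (x * m) := by
  obtain ⟨hm0, hmD⟩ := mem_Ioc.mp hm
  have hD : 0 ≤ D := hδ.trans hδD
  refine abs_sum_fract_div_mul_add_sub_half_le (by rw [coe_Ioc]; exact Set.ordConnected_Ioc)
    (by exact_mod_cast hm0) ((Nat.le_floor_iff (by positivity)).mp hmD) hx fun k hk ↦ ?_
  obtain ⟨hlo, hhi⟩ := mem_Ioc.mp hk
  rw [Nat.div_lt_iff_lt_mul hm0, Nat.floor_lt hD, mul_comm, Nat.cast_mul] at hlo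
  rw [Nat.le_div_iff_mul_le hm0, Nat.le_floor_iff (by positivity), mul_comm, Nat.cast_mul] at hhi
  exact ⟨by linarith, by linarith⟩

lemma rpow_div_add_div_mul_le {m : ℕ} {x D : ℝ} (hm : 0 < m) (hx : 0 < x) :
    (804 * (x / m) ^ (1 / 3 : ℝ) + 15 * D ^ 2 / (x * m)) / m ≤
      804 * (m : ℝ) ^ (-4 / 3 : ℝ) * (x ^ (1 / 3 : ℝ) + x⁻¹ * D ^ 2) := by
  have hm0 : (0 : ℝ) < m := by exact_mod_cast hm
  have hm1 : (1 : ℝ) ≤ m := by exact_mod_cast hm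
  have hcube : (x / m) ^ (1 / 3 : ℝ) / m = x ^ (1 / 3 : ℝ) * (m : ℝ) ^ (-4 / 3 : ℝ) := by
    rw [Real.div_rpow hx.le hm0.le, (by norm_num : (-4 / 3 : ℝ) = -(1 / 3) - 1),
      Real.rpow_sub_one hm0.ne', Real.rpow_neg hm0.le]
    ring
  have hsq : 1 / (m : ℝ) ^ 2 ≤ (m : ℝ) ^ (-4 / 3 : ℝ) := by
    rw [one_div, ← Real.rpow_natCast, ← Real.rpow_neg hm0.le]
    exact Real.rpow_le_rpow_of_exponent_le hm1 (by norm_num)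
  calc _ = 804 * ((x / m) ^ (1 / 3 : ℝ) / m) + 15 * (1 / (m : ℝ) ^ 2) * (x⁻¹ * D ^ 2) := by
        field_simp
    _ ≤ 804 * (x ^ (1 / 3 : ℝ) * (m : ℝ) ^ (-4 / 3 : ℝ)) +
        804 * (m : ℝ) ^ (-4 / 3 : ℝ) * (x⁻¹ * D ^ 2) := by
        rw [hcube]
        gcongr
        norm_num
    _ = _ := by ring

theorem key_estimate_general : ∃ C : ℝ, 0 ≤ C ∧ ∀ (f g : ℕ → ℝ) (B δ x D : ℝ),
    (∀ n : ℕ, 1 ≤ n → f n = ∑ d ∈ n.divisors, (d : ℝ) * g (n / d)) →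
    (∀ n : ℕ, 1 ≤ n → |g n| ≤ B) → 0 ≤ δ → δ ≤ D → 0 < x →
    |∑ d ∈ Ioc ⌊D⌋₊ ⌊2 * D⌋₊, (f d / d) * (Int.fract (x / (d + δ)) - 1 / 2)| ≤
      C * B * (x ^ ((1 : ℝ) / 3) + x⁻¹ * D ^ 2) := by
  have hsummable : Summable fun m : ℕ ↦ (m : ℝ) ^ (-4 / 3 : ℝ) :=
    Real.summable_nat_rpow.mpr (by norm_num)
  refine ⟨804 * ∑' m : ℕ, (m : ℝ) ^ (-4 / 3 : ℝ), by positivity,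
    fun f g B δ x D hf hg hδ hδD hx ↦ ?_⟩
  have hB : 0 ≤ B := (abs_nonneg _).trans (hg 1 le_rfl)
  have hterm : ∀ m ∈ Ioc 0 ⌊2 * D⌋₊, |g m / m *
      ∑ k ∈ Ioc (⌊D⌋₊ / m) (⌊2 * D⌋₊ / m), (Int.fract (x / (m * k + δ)) - 1 / 2)| ≤
        804 * B * (x ^ ((1 : ℝ) / 3) + x⁻¹ * D ^ 2) * (m : ℝ) ^ (-4 / 3 : ℝ) := by
    intro m hm
    have hm0 := (mem_Ioc.mp hm).1
    calc _ ≤ B / m * (804 * (x / m) ^ (1 / 3 : ℝ) + 15 * D ^ 2 / (x * m)) := by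
          rw [abs_mul, abs_div, Nat.abs_cast]
          gcongr
          exacts [hg m hm0, abs_sum_Ioc_fract_div_mul_add_sub_half_le hm hδ hδD hx]
      _ = B * ((804 * (x / m) ^ (1 / 3 : ℝ) + 15 * D ^ 2 / (x * m)) / m) := by ring
      _ ≤ B * (804 * (m : ℝ) ^ (-4 / 3 : ℝ) * (x ^ (1 / 3 : ℝ) + x⁻¹ * D ^ 2)) := by
          gcongr B * ?_
          exact rpow_div_add_div_mul_le hm0 hx
      _ = _ := by ring
  calc _ ≤ ∑ m ∈ Ioc 0 ⌊2 * D⌋₊,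
        804 * B * (x ^ ((1 : ℝ) / 3) + x⁻¹ * D ^ 2) * (m : ℝ) ^ (-4 / 3 : ℝ) := by
        rw [sum_Ioc_div_mul_eq hf fun d ↦ Int.fract (x / (d + δ)) - 1 / 2]
        simp_rw [Nat.cast_mul]
        exact (abs_sum_le_sum_abs _ _).trans (sum_le_sum hterm)
    _ ≤ 804 * B * (x ^ ((1 : ℝ) / 3) + x⁻¹ * D ^ 2) * ∑' m : ℕ, (m : ℝ) ^ (-4 / 3 : ℝ) := by
        rw [← mul_sum]
        gcongr
        exact hsummable.sum_le_tsum _ fun m _ ↦ by positivity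
    _ = _ := by ring

/-- Key estimate: for `f = id ∗ g` with `g` bounded and `δ ∈ {0,1}`, uniformly for
`1 ≤ D ≤ x`, `𝔖_δ(x,D) = ∑_{D < d ≤ 2D} (f(d)/d) ψ(x/(d+δ))` satisfies
`𝔖_δ(x,D) ≪ x^{1/3} + x^{1/2} D^{-1/2} log x + x⁻¹ D²`. -/
theorem key_estimate (f g : ℕ → ℝ)
    (hf : ∀ n : ℕ, 1 ≤ n → f n = ∑ d ∈ n.divisors, (d : ℝ) * g (n / d))
    (hg : ∃ B : ℝ, ∀ n : ℕ, 1 ≤ n → |g n| ≤ B)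
    (δ : ℝ) (hδ : δ = 0 ∨ δ = 1) :
    ∃ C : ℝ, ∀ x D : ℝ, 2 ≤ x → 1 ≤ D → D ≤ x →
      |∑ d ∈ Finset.Ioc ⌊D⌋₊ ⌊2 * D⌋₊,
          (f d / d) * (Int.fract (x / (d + δ)) - 1 / 2)| ≤
        C * (x ^ ((1 : ℝ) / 3) + x ^ ((1 : ℝ) / 2) * D ^ (-(1 : ℝ) / 2) * Real.log x
          + x⁻¹ * D ^ 2) := by
  obtain ⟨C, hC, hbound⟩ := key_estimate_general
  obtain ⟨B, hB⟩ := hg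
  have hB0 : 0 ≤ B := (abs_nonneg _).trans (hB 1 le_rfl)
  have hδ0 : 0 ≤ δ := by rcases hδ with rfl | rfl <;> norm_num
  have hδ1 : δ ≤ 1 := by rcases hδ with rfl | rfl <;> norm_num
  refine ⟨C * B, fun x D hx hD _ ↦
    (hbound f g B δ x D hf hB hδ0 (hδ1.trans hD) (by linarith)).trans ?_⟩
  have hlog : 0 ≤ x ^ ((1 : ℝ) / 2) * D ^ (-(1 : ℝ) / 2) * Real.log x := by
    have := Real.log_nonneg (by linarith : 1 ≤ x)
    positivity
  gcongr
  linarith
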